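/- There exists a universal constant C > 0 such that the following holds for every positive integer n. Let μ be a probability distribution on 2^[n] × 2^[n] with marginals μ_A, μ_B whose mutual information I(A:B) = Σ_{A,B⊆[n]} μ(A,B) · log₂( μ(A,B) / (μ_A(A)·μ_B(B)) ) is at most k, and let ε ∈ (0, 1/2). Then there exist a positive integer m ≤ 2^{C·√(n(k+1)/ε)}, a partition of 2^[n] × 2^[n] into combinatorial rectangles R₁ = ℱ₁ × 𝒢₁, …, R_m = ℱ_m × 𝒢_m, and labels b₁, …, b_m ∈ {0, 1}, such that Σ_{i=1}^m Σ_{(A,B)∈R_i, DISJ_n(A,B)≠b_i} μ(A,B) ≤ ε; that is, when (A, B) is sampled from μ, the probability that the label of the rectangle containing (A, B) differs from DISJ_n(A, B) is at most ε. -/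

import Mathlib

open Finset Classical

/-!
Let `ν` be the product of the marginals of `μ` and put `y = (k + 1) / ε`. Markov's inequality for
`log₂ (μ / ν)` gives `μ ≤ 2 ^ (4 y) ν` outside a set of `μ`-weight `ε / 2`. So it suffices to
compute disjointness under the *product* distribution `ν` with error `O(2 ^ (-L))`, where `L` is
about `10 y`, using `2 ^ O(√(n L))` rectangles.

For a product distribution put `s ≈ √(n L)` and `δ = 2 ^ (-L)`. If `L > s`, Alice can announce all
of `A`. Otherwise keep a universe `U` known to contain `A ∩ B`.

* If all sets `B` of the current rectangle satisfy `|B ∩ U| ≥ s`, then either at most a `δ` fraction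
  of the pairs is disjoint and the rectangle is labelled "intersecting", or some `B₀` is disjoint
  from a `δ` fraction of the sets `A`, for which the universe shrinks to `U \ B₀`. Since `s`
  elements are lost, this happens at most about `n / s` times.
* If both traces on `U` have at most `s` elements, a derandomised form of the Håstad–Wigderson
  protocol applies: some `Z` contains `A ∩ U` for a `2 ^ (-|A ∩ U| - 1)` fraction of the pairs,
  while for disjoint pairs `B ∩ U ∩ Z` has at most `7/8` of the allowed size, up to an exponentially
  small error. Once the traces have `O(L)` elements, one of them is announced.

The number of rectangles and the error are controlled together by their sum, which is additive under
splitting. On a rectangle of weight `v` it is bounded by an expression `K √(v + 1) + η v`; by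
concavity of the square root, repeatedly peeling off a piece with at least a `p` fraction of the
weight costs only a factor `4 / p` in `K`. Scaling the weight by `(K / η)²` finally turns the bound
on the sum into bounds on both terms.
-/

section LabelledRectangles

variable {X Y Z : Type*}

/-- A partition of `R` into combinatorial rectangles `left i ×ˢ right i`, each carrying a label in
`Z`. Empty rectangles are allowed. -/
structure RectPartition (R : Finset (X × Y)) (Z : Type*) where
  ι : Type
  [fintype : Fintype ι]
  left : ι → Finset X
  right : ι → Finset Y
  label : ι → Z
  disjoint : Pairwise fun i j => Disjoint (left i ×ˢ right i) (left j ×ˢ right j)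
  mem_iff : ∀ p, p ∈ R ↔ ∃ i, p ∈ left i ×ˢ right i

attribute [instance] RectPartition.fintype

/-- The part of the weight `w` on which the label `z` differs from the value of `f`. -/
noncomputable def mislabelled (f : X → Y → Z) (w : X × Y → ℝ) (z : Z) : X × Y → ℝ :=
  {p | f p.1 p.2 ≠ z}.indicator w

/-- The `w`-weight of the rectangle `F × G`. -/
def rectMass (w : X × Y → ℝ) (F : Finset X) (G : Finset Y) : ℝ := ∑ p ∈ F ×ˢ G, w p

variable {f : X → Y → Z} {w : X × Y → ℝ} {F F' : Finset X} {G G' : Finset Y}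

theorem mislabelled_nonneg (hw : ∀ p, 0 ≤ w p) (z : Z) (p : X × Y) : 0 ≤ mislabelled f w z p :=
  Set.indicator_nonneg (fun p _ => hw p) p

theorem mislabelled_le (hw : ∀ p, 0 ≤ w p) (z : Z) (p : X × Y) : mislabelled f w z p ≤ w p :=
  Set.indicator_le_self' (fun p _ => hw p) p

theorem mislabelled_smul (M : ℝ) (z : Z) : mislabelled f (M • w) z = M • mislabelled f w z :=
  Set.indicator_const_smul _ M w

theorem mislabelled_flip (z : Z) (p : X × Y) :
    mislabelled (flip f) (w ∘ Prod.swap) z p.swap = mislabelled f w z p := by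
  simp only [mislabelled, Set.indicator_apply, flip, Set.mem_ofPred_eq, Prod.fst_swap,
    Prod.snd_swap, Function.comp_apply, Prod.swap_swap]

theorem rectMass_nonneg (hw : ∀ p, 0 ≤ w p) (F : Finset X) (G : Finset Y) : 0 ≤ rectMass w F G :=
  sum_nonneg fun p _ => hw p

theorem rectMass_mono (hw : ∀ p, 0 ≤ w p) (hF : F' ⊆ F) (hG : G' ⊆ G) :
    rectMass w F' G' ≤ rectMass w F G :=
  sum_le_sum_of_subset_of_nonneg (product_subset_product hF hG) fun p _ _ => hw p

theorem rectMass_mislabelled_le (hw : ∀ p, 0 ≤ w p) (z : Z) :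
    rectMass (mislabelled f w z) F G ≤ rectMass w F G :=
  sum_le_sum fun p _ => mislabelled_le hw z p

theorem rectMass_smul (M : ℝ) (w : X × Y → ℝ) (F : Finset X) (G : Finset Y) :
    rectMass (M • w) F G = M * rectMass w F G :=
  (mul_sum _ _ _).symm

theorem rectMass_comp_swap {w : X × Y → ℝ} {w' : Y × X → ℝ} (h : ∀ p, w' p.swap = w p)
    (F : Finset X) (G : Finset Y) : rectMass w' G F = rectMass w F G := by
  unfold rectMass
  rw [sum_product_right, sum_product]
  exact sum_congr rfl fun x _ => sum_congr rfl fun y _ => h (x, y)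

theorem disjoint_product_sdiff_left [DecidableEq X] (F F' : Finset X) (G : Finset Y) :
    Disjoint (F' ×ˢ G) ((F \ F') ×ˢ G) :=
  disjoint_product.2 (Or.inl disjoint_sdiff)

theorem disjoint_product_sdiff_right [DecidableEq Y] (F : Finset X) (G G' : Finset Y) :
    Disjoint (F ×ˢ G') (F ×ˢ (G \ G')) :=
  disjoint_product.2 (Or.inr disjoint_sdiff)

theorem product_union_product_sdiff_left [DecidableEq X] (hF : F' ⊆ F) (G : Finset Y) :
    F' ×ˢ G ∪ (F \ F') ×ˢ G = F ×ˢ G := by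
  rw [← union_product, union_sdiff_of_subset hF]

theorem product_union_product_sdiff_right [DecidableEq Y] (F : Finset X) (hG : G' ⊆ G) :
    F ×ˢ G' ∪ F ×ˢ (G \ G') = F ×ˢ G := by
  rw [← product_union, union_sdiff_of_subset hG]

theorem rectMass_add_rectMass_sdiff_left [DecidableEq X] (hF : F' ⊆ F) :
    rectMass w F' G + rectMass w (F \ F') G = rectMass w F G := by
  unfold rectMass
  rw [← sum_union (disjoint_product_sdiff_left F F' G), product_union_product_sdiff_left hF]

theorem sum_rectMass_filter {J : Type*} [Fintype J] (w : X × Y → ℝ) (F : Finset X) (G : Finset Y)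
    (r : J → X → Prop) (q : J → Y → Prop) [∀ j, DecidablePred (r j)] [∀ j, DecidablePred (q j)] :
    ∑ j, rectMass w {x ∈ F | r j x} {y ∈ G | q j y}
      = ∑ p ∈ F ×ˢ G, (#{j | r j p.1 ∧ q j p.2} : ℝ) * w p := by
  simp only [rectMass, ← filter_product, sum_filter]
  rw [sum_comm]
  refine sum_congr rfl fun p _ => ?_
  rw [← sum_filter, sum_const, nsmul_eq_mul]

namespace RectPartition

variable {R S : Finset (X × Y)}

/-- The number of rectangles. -/
def size (P : RectPartition R Z) : ℕ := Fintype.card P.ι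

/-- The total `w`-weight of the points whose rectangle has a label different from the value of
`f`. -/
noncomputable def error (P : RectPartition R Z) (f : X → Y → Z) (w : X × Y → ℝ) : ℝ :=
  ∑ i, rectMass (mislabelled f w (P.label i)) (P.left i) (P.right i)

theorem error_nonneg (P : RectPartition R Z) (hw : ∀ p, 0 ≤ w p) : 0 ≤ P.error f w :=
  sum_nonneg fun _ _ => rectMass_nonneg (mislabelled_nonneg hw _) _ _

theorem error_smul (P : RectPartition R Z) (M : ℝ) : P.error f (M • w) = M * P.error f w := by
  simp only [error, mislabelled_smul, rectMass_smul, mul_sum]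

theorem sum_rectMass (P : RectPartition R Z) (w : X × Y → ℝ) :
    ∑ i, rectMass w (P.left i) (P.right i) = ∑ p ∈ R, w p := by
  unfold rectMass
  rw [← sum_biUnion fun i _ j _ hij => P.disjoint hij]
  refine sum_congr (ext fun p => ?_) fun _ _ => rfl
  simp only [mem_biUnion, mem_univ, true_and, P.mem_iff]

theorem size_pos (P : RectPartition R Z) (hR : R.Nonempty) : 0 < P.size :=
  have ⟨p, hp⟩ := hR
  have ⟨i, _⟩ := (P.mem_iff p).1 hp
  Fintype.card_pos_iff.2 ⟨i⟩

theorem error_le_add_sum_filter (P : RectPartition R Z) {μ ν : X × Y → ℝ} (hμ : ∀ p, 0 ≤ μ p)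
    (hν : ∀ p, 0 ≤ ν p) {M : ℝ} (hM : 0 ≤ M) :
    P.error f μ ≤ M * P.error f ν + ∑ p ∈ R with M * ν p < μ p, μ p := by
  have pointwise (z : Z) (p : X × Y) :
      mislabelled f μ z p ≤ M * mislabelled f ν z p + if M * ν p < μ p then μ p else 0 := by
    simp only [mislabelled, Set.indicator_apply]
    split_ifs <;> linarith [hμ p, mul_nonneg hM (hν p)]
  rw [sum_filter, ← P.sum_rectMass, error, error, mul_sum, ← sum_add_distrib]
  simp only [rectMass, mul_sum, ← sum_add_distrib]
  exact sum_le_sum fun i _ => sum_le_sum fun p _ => pointwise _ p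

/-- The partition of the empty set without any rectangle. -/
protected def empty : RectPartition (∅ : Finset (X × Y)) Z where
  ι := Empty
  left := Empty.elim
  right := Empty.elim
  label := Empty.elim
  disjoint := fun i => i.elim
  mem_iff := by simp

/-- The partition of a rectangle into itself. -/
protected def single (F : Finset X) (G : Finset Y) (z : Z) : RectPartition (F ×ˢ G) Z where
  ι := Unit
  left _ := F
  right _ := G
  label _ := z
  disjoint _ _ hij := (hij rfl).elim
  mem_iff := by simp

/-- The union of partitions of two disjoint sets. -/
protected def union [DecidableEq (X × Y)] (P : RectPartition R Z) (Q : RectPartition S Z)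
    (hRS : Disjoint R S) : RectPartition (R ∪ S) Z where
  ι := P.ι ⊕ Q.ι
  left := Sum.elim P.left Q.left
  right := Sum.elim P.right Q.right
  label := Sum.elim P.label Q.label
  disjoint := by
    have cross (i : P.ι) (j : Q.ι) :
        Disjoint (P.left i ×ˢ P.right i) (Q.left j ×ˢ Q.right j) :=
      hRS.mono (fun p hp => (P.mem_iff p).2 ⟨i, hp⟩) fun p hp => (Q.mem_iff p).2 ⟨j, hp⟩
    rintro (i | i) (j | j) hij
    · exact P.disjoint fun h => hij (congrArg Sum.inl h)
    · exact cross i j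
    · exact (cross j i).symm
    · exact Q.disjoint fun h => hij (congrArg Sum.inr h)
  mem_iff p := by simp only [mem_union, P.mem_iff, Q.mem_iff, Sum.exists, Sum.elim_inl,
    Sum.elim_inr]

/-- The partition obtained by exchanging the two coordinates. -/
protected def swap (P : RectPartition (F ×ˢ G) Z) : RectPartition (G ×ˢ F) Z where
  ι := P.ι
  left := P.right
  right := P.left
  label := P.label
  disjoint i j hij := by simpa only [disjoint_product, or_comm] using P.disjoint hij
  mem_iff p := by simpa only [mem_product, and_comm, Prod.fst_swap, Prod.snd_swap]
    using P.mem_iff p.swap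

theorem size_empty : (RectPartition.empty : RectPartition (∅ : Finset (X × Y)) Z).size = 0 := rfl

theorem size_single (F : Finset X) (G : Finset Y) (z : Z) :
    (RectPartition.single F G z).size = 1 := rfl

theorem size_union [DecidableEq (X × Y)] (P : RectPartition R Z) (Q : RectPartition S Z)
    (hRS : Disjoint R S) : (P.union Q hRS).size = P.size + Q.size :=
  Fintype.card_sum

theorem error_empty (f : X → Y → Z) (w : X × Y → ℝ) : RectPartition.empty.error f w = 0 :=
  Fintype.sum_empty (ι := Empty) _

theorem error_single (f : X → Y → Z) (w : X × Y → ℝ) (F : Finset X) (G : Finset Y) (z : Z) :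
    (RectPartition.single F G z).error f w = rectMass (mislabelled f w z) F G :=
  Fintype.sum_unique (ι := Unit) _

theorem error_union [DecidableEq (X × Y)] (P : RectPartition R Z) (Q : RectPartition S Z)
    (hRS : Disjoint R S) : (P.union Q hRS).error f w = P.error f w + Q.error f w :=
  Fintype.sum_sum_type _

theorem size_swap (P : RectPartition (F ×ˢ G) Z) : P.swap.size = P.size := rfl

theorem error_swap (P : RectPartition (F ×ˢ G) Z) :
    P.swap.error (flip f) (w ∘ Prod.swap) = P.error f w :=
  sum_congr rfl fun _ _ => rectMass_comp_swap (mislabelled_flip _) _ _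

theorem exists_fin (P : RectPartition R Z) (f : X → Y → Z) (w : X × Y → ℝ) :
    ∃ (F : Fin P.size → Finset X) (G : Fin P.size → Finset Y) (z : Fin P.size → Z),
      (∀ i j, i ≠ j → Disjoint (F i ×ˢ G i) (F j ×ˢ G j)) ∧
      (∀ p ∈ R, ∃ i, p ∈ F i ×ˢ G i) ∧
      ∑ i, ∑ p ∈ F i ×ˢ G i, mislabelled f w (z i) p = P.error f w := by
  let e : Fin P.size ≃ P.ι := (Fintype.equivFin P.ι).symm
  refine ⟨P.left ∘ e, P.right ∘ e, P.label ∘ e, fun i j hij => P.disjoint (e.injective.ne hij),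
    fun p hp => ?_, e.sum_comp fun i =>
      rectMass (mislabelled f w (P.label i)) (P.left i) (P.right i)⟩
  obtain ⟨i, hi⟩ := (P.mem_iff p).1 hp
  exact ⟨e.symm i, by simpa only [Function.comp_apply, e.apply_symm_apply] using hi⟩

end RectPartition

/-- `R` has a partition into labelled rectangles for which the number of rectangles plus the
mislabelled weight is at most `c`. -/
def HasRectCost (f : X → Y → Z) (w : X × Y → ℝ) (R : Finset (X × Y)) (c : ℝ) : Prop :=
  ∃ P : RectPartition R Z, P.size + P.error f w ≤ c

namespace HasRectCost

variable {R S : Finset (X × Y)} {c d : ℝ}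

theorem mono (h : HasRectCost f w R c) (hcd : c ≤ d) : HasRectCost f w R d :=
  h.imp fun _ hP => hP.trans hcd

theorem empty (f : X → Y → Z) (w : X × Y → ℝ) : HasRectCost f w ∅ 0 :=
  ⟨.empty, by rw [RectPartition.size_empty, RectPartition.error_empty, Nat.cast_zero, add_zero]⟩

theorem single (f : X → Y → Z) (w : X × Y → ℝ) (F : Finset X) (G : Finset Y) (z : Z) :
    HasRectCost f w (F ×ˢ G) (1 + rectMass (mislabelled f w z) F G) :=
  ⟨.single F G z, by rw [RectPartition.size_single, RectPartition.error_single, Nat.cast_one]⟩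

theorem union [DecidableEq (X × Y)] (hR : HasRectCost f w R c) (hS : HasRectCost f w S d)
    (hRS : Disjoint R S) : HasRectCost f w (R ∪ S) (c + d) := by
  obtain ⟨P, hP⟩ := hR
  obtain ⟨Q, hQ⟩ := hS
  refine ⟨P.union Q hRS, ?_⟩
  rw [RectPartition.size_union, RectPartition.error_union]
  push_cast
  linarith

theorem biUnion {J : Type*} {T : Finset J} {R : J → Finset (X × Y)} {c : J → ℝ}
    (hd : (T : Set J).PairwiseDisjoint R) (h : ∀ j ∈ T, HasRectCost f w (R j) (c j)) :
    HasRectCost f w (T.biUnion R) (∑ j ∈ T, c j) := by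
  induction T using Finset.induction_on with
  | empty => simpa using empty f w
  | insert j T hj ih =>
    rw [biUnion_insert, sum_insert hj]
    refine (h j (mem_insert_self j T)).union (ih ?_ fun i hi => h i (mem_insert_of_mem hi)) ?_
    · exact hd.subset (coe_subset.2 (subset_insert j T))
    · refine (disjoint_biUnion_right _ _ _).2 fun i hi => hd ?_ ?_ ?_
      · exact mem_coe.2 (mem_insert_self j T)
      · exact mem_coe.2 (mem_insert_of_mem hi)
      · rintro rfl
        exact hj hi

theorem of_swap (h : HasRectCost (flip f) (w ∘ Prod.swap) (G ×ˢ F) c) :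
    HasRectCost f w (F ×ˢ G) c := by
  obtain ⟨P, hP⟩ := h
  have error_eq : P.swap.error f w = P.error (flip f) (w ∘ Prod.swap) :=
    P.error_swap (f := flip f) (w := w ∘ Prod.swap)
  refine ⟨P.swap, ?_⟩
  rwa [error_eq, P.size_swap]

theorem split_left [DecidableEq X] (hF : F' ⊆ F) (h : HasRectCost f w (F' ×ˢ G) c)
    (h' : HasRectCost f w ((F \ F') ×ˢ G) d) : HasRectCost f w (F ×ˢ G) (c + d) :=
  product_union_product_sdiff_left hF G ▸ h.union h' (disjoint_product_sdiff_left F F' G)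

theorem split_right [DecidableEq Y] (hG : G' ⊆ G) (h : HasRectCost f w (F ×ˢ G') c)
    (h' : HasRectCost f w (F ×ˢ (G \ G')) d) : HasRectCost f w (F ×ˢ G) (c + d) :=
  product_union_product_sdiff_right F hG ▸ h.union h' (disjoint_product_sdiff_right F G G')

theorem of_const {z : Z} (h : ∀ x ∈ F, ∀ y ∈ G, f x y = z) : HasRectCost f w (F ×ˢ G) 1 := by
  have no_error : rectMass (mislabelled f w z) F G = 0 :=
    sum_eq_zero fun p hp => Set.indicator_of_notMem
      (not_not.2 (h p.1 (mem_product.1 hp).1 p.2 (mem_product.1 hp).2)) w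
  simpa only [no_error, add_zero] using single f w F G z

/-- The first player announces `g x`, after which the second player announces the value. -/
theorem of_announce [Fintype Z] {M : Type*} {g : X → M} {φ : M → Y → Z} (T : Finset M)
    (hg : ∀ x ∈ F, g x ∈ T) (hφ : ∀ x ∈ F, ∀ y ∈ G, f x y = φ (g x) y) :
    HasRectCost f w (F ×ˢ G) (#T * Fintype.card Z) := by
  let R (q : M × Z) : Finset (X × Y) := {x ∈ F | g x = q.1} ×ˢ {y ∈ G | φ q.1 y = q.2}
  have cover : (T ×ˢ univ).biUnion R = F ×ˢ G := by
    ext ⟨x, y⟩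
    simp only [R, mem_biUnion, mem_product, mem_filter, mem_univ, and_true, Prod.exists]
    constructor
    · rintro ⟨m, z, -, ⟨hx, -⟩, hy, -⟩
      exact ⟨hx, hy⟩
    · rintro ⟨hx, hy⟩
      exact ⟨g x, _, hg x hx, ⟨hx, rfl⟩, hy, rfl⟩
  have disjoint : ((T ×ˢ univ : Finset (M × Z)) : Set (M × Z)).PairwiseDisjoint R := by
    rintro ⟨m, z⟩ - ⟨m', z'⟩ - hne
    refine disjoint_left.2 fun p hp hp' => hne ?_
    simp only [R, mem_product, mem_filter] at hp hp'
    obtain ⟨⟨-, rfl⟩, -, rfl⟩ := hp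
    obtain ⟨⟨-, rfl⟩, -, rfl⟩ := hp'
    rfl
  have h := biUnion (f := f) (w := w) (c := fun _ => 1) disjoint fun q _ =>
    of_const (z := q.2) fun x hx y hy => by
      rw [mem_filter] at hx hy
      rw [hφ x hx.1 y hy.1, hx.2, hy.2]
  rw [cover] at h
  simpa using h

theorem exists_partition {M : ℝ} (hw : ∀ p, 0 ≤ w p) (hM : 0 ≤ M)
    (h : HasRectCost f (M • w) R c) :
    ∃ P : RectPartition R Z, P.size ≤ c ∧ M * P.error f w ≤ c := by
  obtain ⟨P, hP⟩ := h
  rw [P.error_smul] at hP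
  exact ⟨P, by linarith [mul_nonneg hM (P.error_nonneg (f := f) hw)],
    by linarith [P.size.cast_nonneg (α := ℝ)]⟩

end HasRectCost

/-- The rectangle `F × G`, of weight `v`, has a labelled partition of cost `K √(v + 1) + η v`. Here
`K` controls the number of rectangles and `η` the fraction of mislabelled weight. -/
def HasSqrtCost (f : X → Y → Z) (w : X × Y → ℝ) (K η : ℝ) (F : Finset X) (G : Finset Y) : Prop :=
  HasRectCost f w (F ×ˢ G) (K * √(rectMass w F G + 1) + η * rectMass w F G)

theorem one_le_sqrt_rectMass_add_one (hw : ∀ p, 0 ≤ w p) (F : Finset X) (G : Finset Y) :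
    1 ≤ √(rectMass w F G + 1) :=
  Real.one_le_sqrt.2 (by linarith [rectMass_nonneg hw F G])

theorem HasRectCost.hasSqrtCost {K η : ℝ} (hw : ∀ p, 0 ≤ w p) (hK : 0 ≤ K)
    (h : HasRectCost f w (F ×ˢ G) (K + η * rectMass w F G)) : HasSqrtCost f w K η F G :=
  h.mono (by linarith [le_mul_of_one_le_right hK (one_le_sqrt_rectMass_add_one hw F G)])

/-- Cutting a piece of mass `x ≥ p v` from a total mass `v` pays for itself when its cost constant
is smaller by the factor `4 / p`: by concavity the cost of the remainder drops by a multiple of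
`x / √(v + 1)`. -/
theorem mul_sqrt_add_mul_sqrt_sub_le {v x p K : ℝ} (hp : 0 < p) (hp1 : p ≤ 1) (hK : 0 ≤ K)
    (hv : 1 ≤ p * v) (hx : p * v ≤ x) (hxv : x ≤ v) :
    K * √(x + 1) + 4 * K / p * √(v - x + 1) ≤ 4 * K / p * √(v + 1) := by
  have hv1 : 1 ≤ v := by nlinarith
  set a := √(v - x + 1)
  set b := √(v + 1)
  set c := √(x + 1)
  have ha : a ^ 2 = v - x + 1 := Real.sq_sqrt (by linarith)
  have hb : b ^ 2 = v + 1 := Real.sq_sqrt (by linarith)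
  have hc : c ^ 2 = x + 1 := Real.sq_sqrt (by linarith)
  have hb0 : 0 < b := Real.sqrt_pos.2 (by linarith)
  have hc0 : 0 < c := Real.sqrt_pos.2 (by linarith)
  have hab : a ≤ b := Real.sqrt_le_sqrt (by linarith)
  have cut_le : x ≤ 2 * b * (b - a) := by nlinarith [Real.sqrt_nonneg (v - x + 1)]
  have scaled_le : p * b ≤ c := by
    refine (pow_le_pow_iff_left₀ (by positivity) hc0.le two_ne_zero).1 ?_
    rw [mul_pow, hb, hc]
    nlinarith
  have drop : c * p ≤ 4 * (b - a) := by
    have : c * p * b ≤ 4 * (b - a) * b := by nlinarith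
    exact le_of_mul_le_mul_right this hb0
  have piece_le : K * c ≤ 4 * K / p * (b - a) := by
    rw [div_mul_eq_mul_div, le_div_iff₀ hp]
    nlinarith
  linarith

namespace HasSqrtCost

variable {K K' η η' p : ℝ}

theorem mono (hw : ∀ p, 0 ≤ w p) (hK : K ≤ K') (hη : η ≤ η') (h : HasSqrtCost f w K η F G) :
    HasSqrtCost f w K' η' F G :=
  HasRectCost.mono h (add_le_add (mul_le_mul_of_nonneg_right hK (Real.sqrt_nonneg _))
    (mul_le_mul_of_nonneg_right hη (rectMass_nonneg hw F G)))

theorem of_swap (h : HasSqrtCost (flip f) (w ∘ Prod.swap) K η G F) : HasSqrtCost f w K η F G := by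
  have hm : rectMass (w ∘ Prod.swap) G F = rectMass w F G := rectMass_comp_swap (fun _ => rfl) F G
  rw [HasSqrtCost, hm] at h
  exact HasRectCost.of_swap h

theorem split_left [DecidableEq X] (hw : ∀ p, 0 ≤ w p) (hK : 0 ≤ K) (hK' : 0 ≤ K') (hF : F' ⊆ F)
    (h : HasSqrtCost f w K η F' G) (h' : HasSqrtCost f w K' η (F \ F') G) :
    HasSqrtCost f w (K + K') η F G := by
  refine (HasRectCost.split_left hF h h').mono ?_
  have hm := rectMass_add_rectMass_sdiff_left (w := w) (G := G) hF
  have h₁ : K * √(rectMass w F' G + 1) ≤ K * √(rectMass w F G + 1) := by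
    gcongr; exact rectMass_mono hw hF subset_rfl
  have h₂ : K' * √(rectMass w (F \ F') G + 1) ≤ K' * √(rectMass w F G + 1) := by
    gcongr; exact rectMass_mono hw sdiff_subset subset_rfl
  rw [← hm] at h₁ h₂ ⊢
  linarith

theorem split_right [DecidableEq Y] (hw : ∀ p, 0 ≤ w p) (hK : 0 ≤ K) (hK' : 0 ≤ K') (hG : G' ⊆ G)
    (h : HasSqrtCost f w K η F G') (h' : HasSqrtCost f w K' η F (G \ G')) :
    HasSqrtCost f w (K + K') η F G := by
  have swap {G : Finset Y} {K : ℝ} (h : HasSqrtCost f w K η F G) :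
      HasSqrtCost (flip f) (w ∘ Prod.swap) K η G F := of_swap h
  exact of_swap (split_left (fun p => hw p.swap) hK hK' hG (swap h) (swap h'))

theorem add_constant_right [DecidableEq Y] (hw : ∀ p, 0 ≤ w p) (hK : 0 ≤ K) (hη : 0 ≤ η) (z : Z)
    (hG : G' ⊆ G) (hz : rectMass (mislabelled f w z) F G' ≤ η' * rectMass w F G)
    (h : HasSqrtCost f w K η F (G \ G')) : HasSqrtCost f w (K + 1) (η + η') F G := by
  refine (HasRectCost.split_right hG (HasRectCost.single f w F G' z) h).mono ?_
  have mass_le : rectMass w F (G \ G') ≤ rectMass w F G := rectMass_mono hw subset_rfl sdiff_subset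
  have h₁ : K * √(rectMass w F (G \ G') + 1) ≤ K * √(rectMass w F G + 1) := by gcongr
  linarith [one_le_sqrt_rectMass_add_one hw F G, mul_le_mul_of_nonneg_left mass_le hη]

theorem of_rectMass_le (hw : ∀ p, 0 ≤ w p) [Nonempty Z] (hη : 0 ≤ η)
    (h : rectMass w F G + 1 ≤ K ^ 2) (hK : 0 ≤ K) : HasSqrtCost f w K η F G := by
  refine (HasRectCost.single f w F G (Classical.arbitrary Z)).mono ?_
  have hm := rectMass_nonneg hw F G
  have error_le := rectMass_mislabelled_le (f := f) (F := F) (G := G) hw (Classical.arbitrary Z)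
  have sqrt_le : √(rectMass w F G + 1) ≤ K := (Real.sqrt_le_left hK).2 h
  nlinarith [Real.mul_self_sqrt (show 0 ≤ rectMass w F G + 1 by linarith),
    Real.sqrt_nonneg (rectMass w F G + 1), mul_nonneg hη hm]

theorem of_peeling [Nonempty Z] (hw : ∀ p, 0 ≤ w p) (hp : 0 < p) (hp1 : p ≤ 1) (hK : 1 ≤ K)
    (hη : 0 ≤ η)
    (piece : ∀ F' ⊆ F, 0 < rectMass w F' G →
      ∃ F'' ⊆ F', p * rectMass w F' G ≤ rectMass w F'' G ∧ HasSqrtCost f w K η F'' G) :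
    HasSqrtCost f w (4 * K / p) η F G := by
  induction F using Finset.strongInduction with
  | H F ih =>
    rcases lt_or_ge (p * rectMass w F G) 1 with light | heavy
    · refine of_rectMass_le hw hη ?_ (by positivity)
      rw [div_pow, le_div_iff₀ (by positivity)]
      nlinarith [rectMass_nonneg hw F G]
    · obtain ⟨F', hF', hpF', hcost⟩ := piece F subset_rfl (by nlinarith)
      have hne : F'.Nonempty := by
        rw [nonempty_iff_ne_empty]
        rintro rfl
        have : rectMass w ∅ G = 0 := by simp [rectMass]
        linarith
      have rest := ih (F \ F') (sdiff_ssubset hF' hne) fun F₁ hF₁ =>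
        piece F₁ (hF₁.trans sdiff_subset)
      refine (HasRectCost.split_left hF' hcost rest).mono ?_
      have hsplit := rectMass_add_rectMass_sdiff_left (w := w) (G := G) hF'
      have hrest : rectMass w (F \ F') G = rectMass w F G - rectMass w F' G := by linarith
      have := mul_sqrt_add_mul_sqrt_sub_le hp hp1 (zero_le_one.trans hK) heavy hpF'
        (rectMass_mono hw hF' subset_rfl)
      rw [hrest]
      linarith

/-- Scaling the weight by `(K / δ) ^ 2` balances the number of rectangles against the error. -/
theorem exists_partition {δ : ℝ} (hw : ∀ p, 0 ≤ w p) (hK : 1 ≤ K) (hδ : 0 < δ) (hδ1 : δ ≤ 1)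
    (hm : rectMass w F G = 1) (h : ∀ M : ℝ, 0 ≤ M → HasSqrtCost f (M • w) K δ F G) :
    ∃ P : RectPartition (F ×ˢ G) Z, P.size ≤ 3 * K ^ 2 / δ ∧ P.error f w ≤ 3 * δ := by
  have hratio : 1 ≤ K / δ := (one_le_div₀ hδ).2 (hδ1.trans hK)
  have hcost := h ((K / δ) ^ 2) (by positivity)
  rw [HasSqrtCost, rectMass_smul, hm, mul_one] at hcost
  have sqrt_le : √((K / δ) ^ 2 + 1) ≤ 2 * (K / δ) := by
    rw [Real.sqrt_le_left (by positivity)]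
    nlinarith
  have cost_le : K * √((K / δ) ^ 2 + 1) + δ * (K / δ) ^ 2 ≤ 3 * K ^ 2 / δ :=
    calc _ ≤ K * (2 * (K / δ)) + δ * (K / δ) ^ 2 := by gcongr
      _ = 3 * K ^ 2 / δ := by field_simp; ring
  obtain ⟨P, hsize, herror⟩ := (hcost.mono cost_le).exists_partition hw (by positivity)
  have hscale : 0 < (K / δ) ^ 2 := by positivity
  refine ⟨P, hsize, le_of_mul_le_mul_left (herror.trans_eq ?_) hscale⟩
  field_simp

end HasSqrtCost

/-- The product weight `α × β`. -/
def prodWeight (α : X → ℝ) (β : Y → ℝ) (p : X × Y) : ℝ := α p.1 * β p.2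

section ProdWeight

variable {α : X → ℝ} {β : Y → ℝ}

theorem prodWeight_nonneg (hα : ∀ x, 0 ≤ α x) (hβ : ∀ y, 0 ≤ β y) (p : X × Y) :
    0 ≤ prodWeight α β p :=
  mul_nonneg (hα p.1) (hβ p.2)

theorem prodWeight_comp_swap (α : X → ℝ) (β : Y → ℝ) :
    prodWeight α β ∘ Prod.swap = prodWeight β α :=
  funext fun _ => mul_comm _ _

theorem smul_prodWeight (M : ℝ) (α : X → ℝ) (β : Y → ℝ) :
    M • prodWeight α β = prodWeight (M • α) β :=
  funext fun _ => (mul_assoc _ _ _).symm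

theorem rectMass_prodWeight (α : X → ℝ) (β : Y → ℝ) (F : Finset X) (G : Finset Y) :
    rectMass (prodWeight α β) F G = (∑ x ∈ F, α x) * ∑ y ∈ G, β y := by
  rw [sum_mul_sum, rectMass, sum_product]
  rfl

theorem exists_column_of_lt_rectMass_mislabelled [DecidableEq Z] (hβ : ∀ y, 0 ≤ β y) {δ : ℝ}
    {z : Z}
    (h : δ * rectMass (prodWeight α β) F G < rectMass (mislabelled f (prodWeight α β) z) F G) :
    ∃ y ∈ G, δ * rectMass (prodWeight α β) F G
      ≤ rectMass (prodWeight α β) {x ∈ F | f x y ≠ z} G := by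
  obtain ⟨y, hy, hle⟩ : ∃ y ∈ G, δ * ∑ x ∈ F, α x ≤ ∑ x ∈ F with f x y ≠ z, α x := by
    by_contra! hcon
    refine h.not_ge ?_
    rw [rectMass_prodWeight, rectMass, sum_product_right, ← mul_assoc, mul_sum]
    refine sum_le_sum fun y hy => ?_
    have column : ∑ x ∈ F, mislabelled f (prodWeight α β) z (x, y)
        = (∑ x ∈ F with f x y ≠ z, α x) * β y := by
      rw [sum_mul, sum_filter]
      exact sum_congr rfl fun x _ => Set.indicator_apply _ _ _
    rw [column]
    exact mul_le_mul_of_nonneg_right (hcon y hy).le (hβ y)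
  refine ⟨y, hy, ?_⟩
  rw [rectMass_prodWeight, rectMass_prodWeight, ← mul_assoc]
  exact mul_le_mul_of_nonneg_right hle (sum_nonneg fun y _ => hβ y)

end ProdWeight

end LabelledRectangles

section RandomSuperset

variable {V : Type*} [Fintype V] {A B : Finset V}

theorem sum_pow_card_inter_of_subset (h : Disjoint A B) (x : ℝ) :
    ∑ Z with A ⊆ Z, x ^ #(B ∩ Z) = 2 ^ Fintype.card V * (1 / 2) ^ #A * ((1 + x) / 2) ^ #B := by
  have term_eq (Z : Finset V) : (if A ⊆ Z then x ^ #(B ∩ Z) else 0)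
      = (∏ i ∈ Z, if i ∈ B then x else 1) * ∏ i ∈ Zᶜ, if i ∉ A then (1 : ℝ) else 0 := by
    rw [prod_ite_mem, prod_const, inter_comm Z B, prod_ite_zero]
    simp only [prod_const_one, mul_ite, mul_one, mul_zero]
    refine if_congr ?_ rfl rfl
    simp only [mem_compl, not_imp_not, subset_iff]
  have factor_eq (i : V) : ((if i ∈ B then x else 1) + if i ∉ A then (1 : ℝ) else 0)
      = 2 * (if i ∈ A then (1 / 2 : ℝ) else 1) * (if i ∈ B then (1 + x) / 2 else 1) := by
    by_cases hA : i ∈ A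
    · simp [hA, disjoint_left.1 h hA]
    · by_cases hB : i ∈ B <;> simp [hA, hB] <;> ring
  rw [sum_filter, sum_congr rfl fun Z _ => term_eq Z, ← Fintype.prod_add]
  simp only [factor_eq, prod_mul_distrib, prod_ite_mem, univ_inter, prod_const, card_univ]

theorem card_filter_superset (A : Finset V) :
    (#{Z | A ⊆ Z} : ℝ) = 2 ^ Fintype.card V * (1 / 2) ^ #A := by
  simpa using sum_pow_card_inter_of_subset (disjoint_empty_right A) 1

theorem two_pow_le_four_fifths_pow_mul_three_pow {t t' : ℕ} (ht : 7 * t ≤ 8 * (t' + 1)) :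
    (2 : ℝ) ^ t ≤ (4 / 5) ^ t * 3 ^ (t' + 1) := by
  refine (pow_le_pow_iff_left₀ (by positivity) (by positivity) (by norm_num : 8 ≠ 0)).1 ?_
  calc ((2 : ℝ) ^ t) ^ 8 = (2 ^ 8) ^ t := pow_right_comm _ _ _
    _ ≤ ((4 / 5) ^ 8 * 3 ^ 7) ^ t := by gcongr; norm_num
    _ = ((4 / 5) ^ t) ^ 8 * 3 ^ (7 * t) := by rw [mul_pow, pow_right_comm, ← pow_mul 3]
    _ ≤ ((4 / 5) ^ t) ^ 8 * 3 ^ (8 * (t' + 1)) := by gcongr; norm_num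
    _ = ((4 / 5) ^ t * 3 ^ (t' + 1)) ^ 8 := by rw [mul_pow, ← pow_mul 3, mul_comm 8 (t' + 1)]

/-- Chernoff bound, from the generating function of `#(B ∩ Z)` at `x = 3`. -/
theorem card_filter_lt_card_inter_le (h : Disjoint A B) {t t' : ℕ} (ht : 7 * t ≤ 8 * (t' + 1))
    (hB : #B ≤ t) :
    (#{Z | A ⊆ Z ∧ t' < #(B ∩ Z)} : ℝ) ≤ (4 / 5) ^ t * #{Z | A ⊆ Z} := by
  have markov : (#{Z | A ⊆ Z ∧ t' < #(B ∩ Z)} : ℝ) * 3 ^ (t' + 1)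
      ≤ ∑ Z with A ⊆ Z, (3 : ℝ) ^ #(B ∩ Z) := by
    rw [← filter_filter, ← nsmul_eq_mul]
    refine (card_nsmul_le_sum _ _ _ fun Z hZ => ?_).trans
      (sum_le_sum_of_subset_of_nonneg (filter_subset _ _) fun _ _ _ => by positivity)
    exact pow_le_pow_right₀ (by norm_num) (mem_filter.1 hZ).2
  have generating : ∑ Z with A ⊆ Z, (3 : ℝ) ^ #(B ∩ Z) = #{Z | A ⊆ Z} * 2 ^ #B := by
    rw [sum_pow_card_inter_of_subset h, card_filter_superset]
    norm_num
  have two_pow_le : (2 : ℝ) ^ #B ≤ (4 / 5) ^ t * 3 ^ (t' + 1) :=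
    (pow_le_pow_right₀ one_le_two hB).trans (two_pow_le_four_fifths_pow_mul_three_pow ht)
  refine le_of_mul_le_mul_right ?_ (show (0 : ℝ) < 3 ^ (t' + 1) by positivity)
  calc _ ≤ (#{Z | A ⊆ Z} : ℝ) * 2 ^ #B := markov.trans_eq generating
    _ ≤ #{Z | A ⊆ Z} * ((4 / 5) ^ t * 3 ^ (t' + 1)) := by gcongr
    _ = (4 / 5) ^ t * #{Z | A ⊆ Z} * 3 ^ (t' + 1) := by ring

end RandomSuperset

theorem exists_le_and_le_mul_of_sum_le {ι : Type*} {s : Finset ι} {X Y : ι → ℝ} {q m : ℝ}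
    (hY : ∀ i ∈ s, 0 ≤ Y i) (hq : 0 < q) (hs : s.Nonempty) (hm : 0 < m)
    (hYX : ∑ i ∈ s, Y i ≤ q * ∑ i ∈ s, X i) (hX : 2 * #s * m ≤ ∑ i ∈ s, X i) :
    ∃ i ∈ s, m ≤ X i ∧ Y i ≤ 2 * q * X i := by
  by_contra! hcon
  have term_lt (i) (hi : i ∈ s) : X i < m + Y i / (2 * q) := by
    have := div_nonneg (hY i hi) (mul_pos two_pos hq).le
    rcases lt_or_ge (X i) m with h | h
    · linarith
    · linarith [(lt_div_iff₀' (mul_pos two_pos hq)).2 (hcon i hi h)]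
  have sum_lt := sum_lt_sum_of_nonempty hs term_lt
  have sum_Y_le : (∑ i ∈ s, Y i) / (2 * q) ≤ (∑ i ∈ s, X i) / 2 := by
    rw [div_le_div_iff₀ (by positivity) two_pos]
    linarith
  rw [sum_add_distrib, ← sum_div, sum_const, nsmul_eq_mul] at sum_lt
  linarith

section Disjointness

variable {V : Type*}

/-- The disjointness function, where `true` means disjoint. -/
noncomputable def disj (A B : Finset V) : Bool := decide (Disjoint A B)

theorem flip_disj : flip (disj (V := V)) = disj :=
  funext₂ fun _ _ => decide_eq_decide.2 disjoint_comm

theorem disj_ne_false {A B : Finset V} : disj A B ≠ false ↔ Disjoint A B := by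
  simp [disj]

/-- The sets of `F` and `G` intersect only inside the universe `U`, so that disjointness depends
only on their traces on `U`. -/
def MeetWithin (U : Finset V) (F G : Finset (Finset V)) : Prop := ∀ A ∈ F, ∀ B ∈ G, A ∩ B ⊆ U

namespace MeetWithin

variable {U : Finset V} {F F' G G' : Finset (Finset V)}

theorem symm (h : MeetWithin U F G) : MeetWithin U G F :=
  fun B hB A hA => inter_comm A B ▸ h A hA B hB

theorem mono (h : MeetWithin U F G) (hF : F' ⊆ F) (hG : G' ⊆ G) : MeetWithin U F' G' :=
  fun A hA B hB => h A (hF hA) B (hG hB)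

theorem inter {Z : Finset V} (h : MeetWithin U F G) (hZ : ∀ A ∈ F, A ∩ U ⊆ Z) :
    MeetWithin (U ∩ Z) F G := by
  intro A hA B hB i hi
  have hiU := h A hA B hB hi
  exact mem_inter.2 ⟨hiU, hZ A hA (mem_inter.2 ⟨(mem_inter.1 hi).1, hiU⟩)⟩

theorem sdiff {C : Finset V} (h : MeetWithin U F G) (hC : ∀ A ∈ F, Disjoint A C) :
    MeetWithin (U \ C) F G := fun A hA B hB _ hi =>
  mem_sdiff.2 ⟨h A hA B hB hi, disjoint_left.1 (hC A hA) (mem_inter.1 hi).1⟩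

theorem disj_inter_left {A B : Finset V} (h : MeetWithin U F G) (hA : A ∈ F) (hB : B ∈ G) :
    disj A B = disj (A ∩ U) B := by
  refine decide_eq_decide.2 ?_
  rw [disjoint_iff_inter_eq_empty, disjoint_iff_inter_eq_empty, inter_right_comm,
    inter_eq_left.2 (h A hA B hB)]

end MeetWithin

variable {w : Finset V × Finset V → ℝ} {U : Finset V} {F G : Finset (Finset V)}

theorem card_filter_mul_mislabelled_disj_le [Fintype V] (hw : ∀ p, 0 ≤ w p) {t t' : ℕ}
    (ht : 7 * t ≤ 8 * (t' + 1)) {p : Finset V × Finset V} (hp : #(p.2 ∩ U) ≤ t) :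
    (#{Z | p.1 ∩ U ⊆ Z ∧ t' < #(p.2 ∩ U ∩ Z)} : ℝ) * mislabelled disj w false p
      ≤ (4 / 5) ^ t * (#{Z | p.1 ∩ U ⊆ Z} * w p) := by
  by_cases hd : Disjoint p.1 p.2
  · have traces_disjoint := hd.mono (inter_subset_left (s₂ := U)) (inter_subset_left (s₂ := U))
    rw [← mul_assoc]
    exact mul_le_mul (card_filter_lt_card_inter_le traces_disjoint ht hp)
      (mislabelled_le hw false p) (mislabelled_nonneg hw false p) (by positivity)
  · rw [mislabelled, Set.indicator_of_notMem fun h => hd (disj_ne_false.1 h), mul_zero]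
    exact mul_nonneg (by positivity) (mul_nonneg (Nat.cast_nonneg _) (hw p))

theorem exists_superset_of_card_inter_le [Finite V] (hw : ∀ p, 0 ≤ w p) {a t t' : ℕ}
    (ht : 7 * t ≤ 8 * (t' + 1)) (hF : ∀ A ∈ F, #(A ∩ U) ≤ a) (hG : ∀ B ∈ G, #(B ∩ U) ≤ t)
    (hpos : 0 < rectMass w F G) :
    ∃ Z : Finset V, 1 / 2 ^ (a + 1) * rectMass w F G ≤ rectMass w {A ∈ F | A ∩ U ⊆ Z} G ∧
      rectMass (mislabelled disj w false) {A ∈ F | A ∩ U ⊆ Z} {B ∈ G | t' < #(B ∩ U ∩ Z)}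
        ≤ 2 * (4 / 5) ^ t * rectMass w {A ∈ F | A ∩ U ⊆ Z} G := by
  have := Fintype.ofFinite V
  have sum_mass : ∑ Z, rectMass w {A ∈ F | A ∩ U ⊆ Z} G
      = ∑ p ∈ F ×ˢ G, (#{Z | p.1 ∩ U ⊆ Z} : ℝ) * w p := by
    simpa only [and_true, filter_true]
      using sum_rectMass_filter w F G (fun Z A => A ∩ U ⊆ Z) fun _ _ => True
  have le_mass (p) (hp : p ∈ F ×ˢ G) :
      2 ^ Fintype.card V * (1 / 2) ^ a * w p ≤ #{Z | p.1 ∩ U ⊆ Z} * w p := by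
    rw [card_filter_superset]
    refine mul_le_mul_of_nonneg_right (mul_le_mul_of_nonneg_left ?_ (by positivity)) (hw p)
    exact pow_le_pow_of_le_one (by norm_num) (by norm_num) (hF p.1 (mem_product.1 hp).1)
  obtain ⟨Z, -, hZ⟩ := exists_le_and_le_mul_of_sum_le (s := (univ : Finset (Finset V)))
    (X := fun Z => rectMass w {A ∈ F | A ∩ U ⊆ Z} G)
    (Y := fun Z => rectMass (mislabelled disj w false)
      {A ∈ F | A ∩ U ⊆ Z} {B ∈ G | t' < #(B ∩ U ∩ Z)})
    (q := (4 / 5) ^ t) (m := 1 / 2 ^ (a + 1) * rectMass w F G)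
    (fun Z _ => rectMass_nonneg (mislabelled_nonneg hw false) _ _) (by positivity) univ_nonempty
    (by positivity)
    (by
      rw [sum_rectMass_filter _ F G (fun Z A => A ∩ U ⊆ Z) fun Z B => t' < #(B ∩ U ∩ Z),
        sum_mass, mul_sum]
      exact sum_le_sum fun p hp =>
        card_filter_mul_mislabelled_disj_le hw ht (hG p.2 (mem_product.1 hp).2))
    (by
      rw [sum_mass, card_univ, Fintype.card_finset]
      refine le_trans (le_of_eq ?_) (sum_le_sum le_mass)
      rw [← mul_sum, rectMass]
      push_cast
      rw [pow_succ, div_pow, one_pow]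
      field_simp)
  exact ⟨Z, hZ⟩

/-- The rectangles whose sets meet within some universe `U`, with traces on `U` of at most `a` and
`b` elements, have cost `K √(v + 1) + η v`, where `v` is the weight of the rectangle. -/
def TraceCost (w : Finset V × Finset V → ℝ) (a b : ℕ) (K η : ℝ) : Prop :=
  ∀ (U : Finset V) (F G : Finset (Finset V)), MeetWithin U F G →
    (∀ A ∈ F, #(A ∩ U) ≤ a) → (∀ B ∈ G, #(B ∩ U) ≤ b) → HasSqrtCost disj w K η F G

namespace TraceCost

variable {a b t t' : ℕ} {K K' η η' : ℝ}

theorem mono (hw : ∀ p, 0 ≤ w p) (hK : K ≤ K') (hη : η ≤ η') (h : TraceCost w a b K η) :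
    TraceCost w a b K' η' :=
  fun U F G hU hF hG => (h U F G hU hF hG).mono hw hK hη

theorem swap (h : TraceCost w a b K η) : TraceCost (w ∘ Prod.swap) b a K η :=
  fun U F G hU hF hG => HasSqrtCost.of_swap (flip_disj ▸ h U G F hU.symm hG hF)

/-- Alice announces her trace. -/
theorem of_card_le [Fintype V] (hw : ∀ p, 0 ≤ w p) (hK : 2 * (#{S : Finset V | #S ≤ a} : ℝ) ≤ K) :
    TraceCost w a b K 0 := by
  intro U F G hU hF _
  refine HasRectCost.hasSqrtCost hw (le_trans (by positivity) hK) ?_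
  refine (HasRectCost.of_announce (g := (· ∩ U)) {S : Finset V | #S ≤ a}
    (fun A hA => mem_filter.2 ⟨mem_univ _, hF A hA⟩)
    fun A hA B hB => hU.disj_inter_left hA hB).mono ?_
  rw [Fintype.card_bool]
  push_cast
  linarith

/-- A round of the Håstad–Wigderson protocol: Alice names a set `Z` containing her trace, which
replaces the universe `U` by `U ∩ Z`. Bob answers "intersecting" if his trace does not shrink. -/
theorem shrink_right [Finite V] (hw : ∀ p, 0 ≤ w p) (ht : 7 * t ≤ 8 * (t' + 1)) (hK : 1 ≤ K)
    (hη : 0 ≤ η) (h : TraceCost w a t' K η) :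
    TraceCost w a t (2 ^ (a + 4) * K) (η + 2 * (4 / 5) ^ t) := by
  intro U F G hU hF hG
  have peeled : HasSqrtCost disj w (4 * (K + 1) / (1 / 2 ^ (a + 1))) (η + 2 * (4 / 5) ^ t) F G := by
    have fraction_le_one : (1 : ℝ) / 2 ^ (a + 1) ≤ 1 :=
      div_le_one_of_le₀ (one_le_pow₀ one_le_two) (by positivity)
    refine HasSqrtCost.of_peeling hw (by positivity) fraction_le_one (by linarith) (by positivity)
      fun F' hF' hpos => ?_
    obtain ⟨Z, hmass, herror⟩ :=
      exists_superset_of_card_inter_le hw ht (fun A hA => hF A (hF' hA)) hG hpos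
    refine ⟨{A ∈ F' | A ∩ U ⊆ Z}, filter_subset _ _, hmass, ?_⟩
    refine HasSqrtCost.add_constant_right hw (by linarith) hη false (filter_subset _ G) herror ?_
    refine h (U ∩ Z) _ _ ?_ (fun A hA => ?_) fun B hB => ?_
    · exact (hU.mono ((filter_subset _ _).trans hF') sdiff_subset).inter
        fun A hA => (mem_filter.1 hA).2
    · exact (card_le_card (inter_subset_inter_left inter_subset_left)).trans
        (hF A (hF' (mem_filter.1 hA).1))
    · rw [← filter_not] at hB
      rw [← inter_assoc]
      exact not_lt.1 (mem_filter.1 hB).2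
  refine peeled.mono hw ?_ le_rfl
  calc 4 * (K + 1) / (1 / 2 ^ (a + 1)) = 2 ^ (a + 3) * (K + 1) := by field_simp; ring
    _ ≤ 2 ^ (a + 3) * (2 * K) := by gcongr; linarith
    _ = 2 ^ (a + 4) * K := by ring

theorem shrink_both [Finite V] (hw : ∀ p, 0 ≤ w p) (ht : 7 * t ≤ 8 * (t' + 1)) (hK : 1 ≤ K)
    (hη : 0 ≤ η) (h : TraceCost w t' t' K η) :
    TraceCost w t t (2 ^ (t + t' + 8) * K) (η + 4 * (4 / 5) ^ t) := by
  have left_shrunk : TraceCost w t t' (2 ^ (t' + 4) * K) (η + 2 * (4 / 5) ^ t) :=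
    (h.swap.shrink_right (fun p => hw p.swap) ht hK hη).swap
  have hK' : 1 ≤ 2 ^ (t' + 4) * K := one_le_mul_of_one_le_of_one_le (one_le_pow₀ one_le_two) hK
  refine (left_shrunk.shrink_right hw ht hK' (by positivity)).mono hw (le_of_eq ?_) (by linarith)
  rw [← mul_assoc, ← pow_add]
  ring_nf

/-- Rounds shrink both traces geometrically until they have at most `t₀` elements, when one of them
is announced. The increments `4 * (4 / 5) ^ t` of the error sum up to the telescoping bound. -/
theorem of_rounds [Fintype V] (hw : ∀ p, 0 ≤ w p) {t₀ : ℕ} (ht₀ : 8 ≤ t₀) {K₀ : ℝ}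
    (hK₀ : 2 * (#{S : Finset V | #S ≤ t₀} : ℝ) ≤ K₀) (t : ℕ) :
    TraceCost w t t (2 ^ (24 * t) * K₀) (16 * ((4 / 5) ^ t₀ - (4 / 5) ^ max t t₀)) := by
  have hK₀1 : 1 ≤ K₀ := by
    have hpos : 0 < #{S : Finset V | #S ≤ t₀} := card_pos.2 ⟨∅, by simp⟩
    have : (1 : ℝ) ≤ #{S : Finset V | #S ≤ t₀} := by exact_mod_cast hpos
    linarith
  have hK (t : ℕ) : K₀ ≤ 2 ^ (24 * t) * K₀ :=
    le_mul_of_one_le_left (by linarith) (one_le_pow₀ one_le_two)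
  induction t using Nat.strong_induction_on with
  | _ t ih =>
    rcases le_or_gt t t₀ with hle | hlt
    · rw [max_eq_right hle, sub_self, mul_zero]
      have announced : TraceCost w t₀ t (2 ^ (24 * t) * K₀) 0 := of_card_le hw (hK₀.trans (hK t))
      exact fun U F G hU hF hG => announced U F G hU (fun A hA => (hF A hA).trans hle) hG
    · have decay {i j : ℕ} (hij : i ≤ j) : ((4 : ℝ) / 5) ^ j ≤ (4 / 5) ^ i :=
        pow_le_pow_of_le_one (by norm_num) (by norm_num) hij
      have shrunk := (ih (7 * t / 8) (by omega)).shrink_both (t := t) hw (by omega)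
        (hK₀1.trans (hK _)) (by linarith [decay (le_max_right (7 * t / 8) t₀)])
      refine shrunk.mono hw ?_ ?_
      · rw [← mul_assoc, ← pow_add]
        gcongr
        · exact one_le_two
        · omega
      · rw [max_eq_left hlt.le]
        have pow_eq : ((4 : ℝ) / 5) ^ t = (4 / 5) ^ (t - 1) * (4 / 5) :=
          (pow_sub_one_mul (by omega) _).symm
        linarith [decay (show max (7 * t / 8) t₀ ≤ t - 1 by omega)]

end TraceCost

/-- The rectangles whose sets meet within some universe of at most `u` elements have cost
`K √(v + 1) + δ v`, where `v` is the weight of the rectangle. -/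
def UniverseCost (w : Finset V × Finset V → ℝ) (u : ℕ) (K δ : ℝ) : Prop :=
  ∀ (U : Finset V) (F G : Finset (Finset V)), #U ≤ u → MeetWithin U F G →
    HasSqrtCost disj w K δ F G

namespace UniverseCost

variable {s u : ℕ} {K δ : ℝ}

theorem swap (h : UniverseCost w u K δ) : UniverseCost (w ∘ Prod.swap) u K δ :=
  fun U F G hu hU => HasSqrtCost.of_swap (flip_disj ▸ h U G F hu hU.symm)

variable {α β : Finset V → ℝ}

/-- Unless labelling a rectangle "intersecting" has small error, some `B₀ ∈ G` is disjoint from a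
`δ` fraction of the sets `A ∈ F`, and for those `A` the universe shrinks to `U \ B₀`. -/
theorem of_le_card_inter (hα : ∀ A, 0 ≤ α A) (hβ : ∀ B, 0 ≤ β B) (hK : 1 ≤ K) (hδ : 0 < δ)
    (hδ1 : δ ≤ 1) (h : UniverseCost (prodWeight α β) u K δ) (hu : #U ≤ u + s)
    (hU : MeetWithin U F G) (hG : ∀ B ∈ G, s ≤ #(B ∩ U)) :
    HasSqrtCost disj (prodWeight α β) (4 * K / δ) δ F G := by
  have hw := prodWeight_nonneg hα hβ
  refine HasSqrtCost.of_peeling hw hδ hδ1 hK hδ.le fun F' hF' hpos => ?_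
  rcases le_or_gt (rectMass (mislabelled disj (prodWeight α β) false) F' G)
    (δ * rectMass (prodWeight α β) F' G) with hle | hlt
  · exact ⟨F', subset_rfl, mul_le_of_le_one_left hpos.le hδ1, HasRectCost.hasSqrtCost hw
      (by linarith) ((HasRectCost.single _ _ F' G false).mono (by linarith))⟩
  · obtain ⟨B₀, hB₀, hmass⟩ := exists_column_of_lt_rectMass_mislabelled hβ hlt
    refine ⟨_, filter_subset _ _, hmass, h (U \ B₀) _ _ ?_ ?_⟩
    · have hcard := card_sdiff_add_card_inter U B₀
      have := inter_comm U B₀ ▸ hG B₀ hB₀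
      omega
    · exact (hU.mono ((filter_subset _ _).trans hF') subset_rfl).sdiff
        fun A hA => disj_ne_false.1 (mem_filter.1 hA).2

/-- Both sides are split according to whether the traces have fewer than `s` elements. -/
theorem add_of_traceCost {K' : ℝ} (hα : ∀ A, 0 ≤ α A) (hβ : ∀ B, 0 ≤ β B) (hK : 1 ≤ K)
    (hδ : 0 < δ) (hδ1 : δ ≤ 1) (hK' : K' ≤ K) (traces : TraceCost (prodWeight α β) s s K' δ)
    (h : UniverseCost (prodWeight α β) u K δ) :
    UniverseCost (prodWeight α β) (u + s) (9 / δ * K) δ := by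
  intro U F G hu hU
  have hw := prodWeight_nonneg hα hβ
  set G' := {B ∈ G | #(B ∩ U) < s} with hG'
  set F' := {A ∈ F | #(A ∩ U) < s} with hF'
  have small : HasSqrtCost disj (prodWeight α β) K δ F' G' := by
    refine HasSqrtCost.mono hw hK' le_rfl
      (traces U F' G' (hU.mono (filter_subset _ _) (filter_subset _ _)) ?_ ?_)
    · exact fun A hA => (mem_filter.1 hA).2.le
    · exact fun B hB => (mem_filter.1 hB).2.le
  have large_right : HasSqrtCost disj (prodWeight α β) (4 * K / δ) δ F (G \ G') := by
    refine h.of_le_card_inter hα hβ hK hδ hδ1 hu (hU.mono subset_rfl sdiff_subset) fun B hB => ?_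
    rw [hG', ← filter_not] at hB
    exact not_lt.1 (mem_filter.1 hB).2
  have large_left : HasSqrtCost disj (prodWeight α β) (4 * K / δ) δ (F \ F') G' := by
    refine HasSqrtCost.of_swap ?_
    rw [flip_disj, prodWeight_comp_swap]
    refine (prodWeight_comp_swap α β ▸ h.swap).of_le_card_inter hβ hα hK hδ hδ1 hu
      (hU.mono sdiff_subset (filter_subset _ _)).symm fun A hA => ?_
    rw [hF', ← filter_not] at hA
    exact not_lt.1 (mem_filter.1 hA).2
  have hK0 : 0 ≤ K := by linarith
  refine HasSqrtCost.mono hw ?_ le_rfl (HasSqrtCost.split_right hw (by positivity) (by positivity)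
    (filter_subset _ G) (HasSqrtCost.split_left hw hK0 (by positivity) (filter_subset _ F)
      small large_left) large_right)
  have : K ≤ K / δ := le_div_self hK0 hδ hδ1
  linarith [show 9 / δ * K = 9 * (K / δ) by ring, show 4 * K / δ = 4 * (K / δ) by ring]

theorem of_traceCost (hα : ∀ A, 0 ≤ α A) (hβ : ∀ B, 0 ≤ β B) (hK : 1 ≤ K) (hδ : 0 < δ)
    (hδ1 : δ ≤ 1) (traces : TraceCost (prodWeight α β) s s K δ) (j : ℕ) :
    UniverseCost (prodWeight α β) (j * s) ((9 / δ) ^ j * K) δ := by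
  induction j with
  | zero =>
    intro U F G hu hU
    obtain rfl : U = ∅ := by simpa using hu
    simpa using traces ∅ F G hU (by simp) (by simp)
  | succ j ih =>
    have factor : 1 ≤ 9 / δ := (one_le_div₀ hδ).2 (by linarith)
    have hKj : K ≤ (9 / δ) ^ j * K := le_mul_of_one_le_left (by linarith) (one_le_pow₀ factor)
    rw [Nat.succ_mul, pow_succ', mul_assoc]
    exact add_of_traceCost hα hβ (hK.trans hKj) hδ hδ1 hKj traces ih

end UniverseCost

/-- Give each set `S` the weight `x ^ #S`, which is at least `x ^ t` for the counted sets. -/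
theorem card_filter_card_le [Fintype V] {x : ℝ} (hx : 0 < x) (hx1 : x ≤ 1) (t : ℕ) :
    (#{S : Finset V | #S ≤ t} : ℝ) ≤ Real.exp (Fintype.card V * x + t / x) := by
  have sum_pow : ∑ S : Finset V, x ^ #S ≤ Real.exp (Fintype.card V * x) := by
    have binomial := sum_pow_mul_eq_add_pow x 1 (univ : Finset V)
    simp only [one_pow, mul_one, powerset_univ, card_univ] at binomial
    rw [binomial, Real.exp_nat_mul]
    gcongr
    exact Real.add_one_le_exp x
  have card_mul_pow : (#{S : Finset V | #S ≤ t} : ℝ) * x ^ t ≤ ∑ S : Finset V, x ^ #S := by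
    rw [← nsmul_eq_mul, ← sum_const]
    refine (sum_le_sum fun S hS => ?_).trans
      (sum_le_univ_sum_of_nonneg (s := {S : Finset V | #S ≤ t}) fun S => by positivity)
    exact pow_le_pow_of_le_one hx.le hx1 (mem_filter.1 hS).2
  have inv_le : 1 ≤ x ^ t * Real.exp (t / x) := by
    have : x⁻¹ ≤ Real.exp x⁻¹ := by linarith [Real.add_one_le_exp x⁻¹]
    rw [div_eq_mul_inv, Real.exp_nat_mul, ← mul_pow]
    exact one_le_pow₀ ((mul_inv_cancel₀ hx.ne').symm.trans_le (by gcongr))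
  rw [Real.exp_add]
  calc (#{S : Finset V | #S ≤ t} : ℝ)
      ≤ #{S : Finset V | #S ≤ t} * (x ^ t * Real.exp (t / x)) :=
        le_mul_of_one_le_right (Nat.cast_nonneg _) inv_le
    _ ≤ (∑ S : Finset V, x ^ #S) * Real.exp (t / x) := by
        rw [← mul_assoc]; gcongr
    _ ≤ _ := by gcongr

variable [Fintype V] {L s : ℕ}

theorem card_filter_card_le_twenty_mul (hL : 1 ≤ L) (hLs : L ≤ s)
    (hs : Fintype.card V * L ≤ s * s) : (#{S : Finset V | #S ≤ 20 * L} : ℝ) ≤ 2 ^ (42 * s) := by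
  have hL0 : (0 : ℝ) < L := by exact_mod_cast hL
  have hs0 : (0 : ℝ) < s := hL0.trans_le (by exact_mod_cast hLs)
  refine (card_filter_card_le (x := L / s) (by positivity)
    (div_le_one_of_le₀ (by exact_mod_cast hLs) hs0.le) (20 * L)).trans ?_
  have exponent_le : Fintype.card V * (L / s : ℝ) + (20 * L : ℕ) / (L / s : ℝ) ≤ 21 * s := by
    have first : Fintype.card V * (L / s : ℝ) ≤ s := by
      rw [← mul_div_assoc, div_le_iff₀ hs0]
      exact_mod_cast hs
    have second : ((20 * L : ℕ) : ℝ) / (L / s : ℝ) = 20 * s := by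
      push_cast
      field_simp
    linarith
  have exp_le : Real.exp 1 ≤ 2 ^ 2 := by linarith [Real.exp_one_lt_d9]
  calc Real.exp _ ≤ Real.exp ((21 * s : ℕ) * 1) :=
        Real.exp_le_exp.2 (exponent_le.trans_eq (by push_cast; ring))
    _ ≤ (2 ^ 2) ^ (21 * s) := by rw [Real.exp_nat_mul]; gcongr
    _ = 2 ^ (42 * s) := by rw [← pow_mul]; congr 1; ring

theorem sixteen_mul_four_fifths_pow_le (hL : 1 ≤ L) :
    16 * (4 / 5 : ℝ) ^ (20 * L) ≤ (1 / 2) ^ L := by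
  have base_le : ((4 : ℝ) / 5) ^ 20 ≤ 1 / 2 * (1 / 16) := by norm_num
  have sixteen : ((1 : ℝ) / 16) ^ L ≤ 1 / 16 :=
    pow_le_of_le_one (by norm_num) (by norm_num) (by omega)
  calc 16 * (4 / 5 : ℝ) ^ (20 * L) ≤ 16 * (1 / 2 * (1 / 16)) ^ L := by rw [pow_mul]; gcongr
    _ = 16 * (1 / 16) ^ L * (1 / 2) ^ L := by rw [mul_pow]; ring
    _ ≤ (1 / 2) ^ L := mul_le_of_le_one_left (by positivity) (by linarith)

theorem traceCost_two_pow (hw : ∀ p, 0 ≤ w p) (hL : 1 ≤ L) (hLs : L ≤ s)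
    (hs : Fintype.card V * L ≤ s * s) : TraceCost w s s (2 ^ (67 * s)) ((1 / 2) ^ L) := by
  have card_le : 2 * (#{S : Finset V | #S ≤ 20 * L} : ℝ) ≤ 2 ^ (43 * s) := by
    have two_le : (2 : ℝ) ≤ 2 ^ s := le_self_pow₀ one_le_two (by omega)
    calc 2 * (#{S : Finset V | #S ≤ 20 * L} : ℝ) ≤ 2 ^ s * 2 ^ (42 * s) := by
          gcongr; exact card_filter_card_le_twenty_mul hL hLs hs
      _ = 2 ^ (43 * s) := by rw [← pow_add]; congr 1; ring
  refine (TraceCost.of_rounds hw (by omega) card_le s).mono hw (le_of_eq ?_) ?_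
  · rw [← pow_add]
    congr 1
    ring
  · have : (0 : ℝ) ≤ (4 / 5) ^ max s (20 * L) := by positivity
    linarith [sixteen_mul_four_fifths_pow_le hL]

theorem nine_div_pow_le (hL : 1 ≤ L) (j : ℕ) :
    (9 / (1 / 2) ^ L : ℝ) ^ j ≤ 2 ^ (5 * (L * j)) := by
  have base_le : (9 / (1 / 2) ^ L : ℝ) ≤ 2 ^ (5 * L) :=
    calc (9 / (1 / 2) ^ L : ℝ) = 9 * 2 ^ L := by rw [one_div, inv_pow, div_inv_eq_mul]
      _ ≤ 16 ^ L * 2 ^ L := by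
        gcongr
        exact (show (9 : ℝ) ≤ 16 by norm_num).trans (le_self_pow₀ (by norm_num) (by omega))
      _ = 2 ^ (5 * L) := by rw [← mul_pow, pow_mul]; norm_num
  calc (9 / (1 / 2) ^ L : ℝ) ^ j ≤ (2 ^ (5 * L)) ^ j := by gcongr
    _ = 2 ^ (5 * (L * j)) := by rw [← pow_mul, mul_assoc]

theorem mul_div_add_one_le {n : ℕ} (hL : 1 ≤ L) (hLs : L ≤ s) (hs : n * L ≤ s * s) :
    L * (n / s + 1) ≤ 2 * s := by
  have : L * (n / s) ≤ s := by
    have hs0 : 0 < s := by omega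
    refine Nat.le_of_mul_le_mul_right ?_ hs0
    calc L * (n / s) * s = n / s * s * L := by ring
      _ ≤ n * L := Nat.mul_le_mul_right L (Nat.div_mul_le_self n s)
      _ ≤ s * s := hs
  linarith

variable {α β : Finset V → ℝ}

theorem hasSqrtCost_disj_prodWeight (hα : ∀ A, 0 ≤ α A) (hβ : ∀ B, 0 ≤ β B) (hL : 1 ≤ L)
    (hLs : L ≤ s) (hs : Fintype.card V * L ≤ s * s) :
    HasSqrtCost disj (prodWeight α β) (2 ^ (77 * s)) ((1 / 2) ^ L) univ univ := by
  set j := Fintype.card V / s + 1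
  have hw := prodWeight_nonneg hα hβ
  have card_le : Fintype.card V ≤ j * s := by
    rw [add_one_mul]
    exact (Nat.lt_div_mul_add (by omega)).le
  have hLj : L * j ≤ 2 * s := mul_div_add_one_le hL hLs hs
  have factor_le : (9 / (1 / 2) ^ L : ℝ) ^ j ≤ 2 ^ (10 * s) :=
    (nine_div_pow_le hL j).trans (pow_le_pow_right₀ one_le_two (by omega))
  refine (UniverseCost.of_traceCost hα hβ (one_le_pow₀ one_le_two) (by positivity)
    (pow_le_one₀ (by norm_num) (by norm_num)) (traceCost_two_pow hw hL hLs hs) j univ univ univ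
    card_le fun _ _ _ _ => subset_univ _).mono hw ?_ le_rfl
  calc (9 / (1 / 2) ^ L : ℝ) ^ j * 2 ^ (67 * s) ≤ 2 ^ (10 * s) * 2 ^ (67 * s) := by gcongr
    _ = 2 ^ (77 * s) := by rw [← pow_add]; congr 1; ring

/-- Alice announces her set. -/
theorem hasRectCost_disj (w : Finset V × Finset V → ℝ) :
    HasRectCost disj w (univ ×ˢ univ) (2 * 2 ^ Fintype.card V) := by
  refine (HasRectCost.of_announce (g := id) (φ := disj) univ (fun A _ => mem_univ A)
    fun A _ B _ => rfl).mono (le_of_eq ?_)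
  rw [Fintype.card_bool, card_univ, Fintype.card_finset]
  push_cast
  ring

theorem exists_partition_of_mul_le_sq (hα : ∀ A, 0 ≤ α A) (hβ : ∀ B, 0 ≤ β B)
    (hα1 : ∑ A, α A = 1) (hβ1 : ∑ B, β B = 1) (hL : 1 ≤ L) (hs0 : 1 ≤ s)
    (hs : Fintype.card V * L ≤ s * s) :
    ∃ P : RectPartition ((univ : Finset (Finset V)) ×ˢ (univ : Finset (Finset V))) Bool,
      (P.size : ℝ) ≤ 2 ^ (158 * s) ∧ P.error disj (prodWeight α β) ≤ 3 * (1 / 2) ^ L := by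
  have hw := prodWeight_nonneg hα hβ
  have hδ : (0 : ℝ) < (1 / 2) ^ L := by positivity
  rcases le_or_gt L s with hLs | hsL
  · have total : rectMass (prodWeight α β) univ univ = 1 := by
      rw [rectMass_prodWeight, hα1, hβ1, mul_one]
    obtain ⟨P, hsize, herror⟩ := HasSqrtCost.exists_partition hw (one_le_pow₀ one_le_two) hδ
      (pow_le_one₀ (by norm_num) (by norm_num)) total fun M hM => by
        rw [smul_prodWeight]
        exact hasSqrtCost_disj_prodWeight (fun A => mul_nonneg hM (hα A)) hβ hL hLs hs
    refine ⟨P, hsize.trans ?_, herror⟩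
    calc 3 * ((2 : ℝ) ^ (77 * s)) ^ 2 / (1 / 2) ^ L = 3 * 2 ^ (154 * s + L) := by
          rw [one_div, inv_pow, div_inv_eq_mul, ← pow_mul, mul_assoc, ← pow_add]
          congr 2
          ring
      _ ≤ 2 ^ 2 * 2 ^ (154 * s + s) := by gcongr <;> norm_num
      _ ≤ 2 ^ (158 * s) := by
        rw [← pow_add]
        exact pow_le_pow_right₀ one_le_two (by omega)
  · have card_le : Fintype.card V ≤ s := by nlinarith
    have scale_nonneg : (0 : ℝ) ≤ 2 * 2 ^ Fintype.card V / (1 / 2) ^ L := by positivity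
    obtain ⟨P, hsize, herror⟩ := (hasRectCost_disj _).exists_partition hw scale_nonneg
    refine ⟨P, hsize.trans ?_, ?_⟩
    · rw [← pow_succ']
      exact pow_le_pow_right₀ one_le_two (by omega)
    · rw [div_mul_eq_mul_div, div_le_iff₀ hδ] at herror
      linarith [le_of_mul_le_mul_left herror (by positivity)]

theorem exists_partition_size_le_rpow [Nonempty V] (hα : ∀ A, 0 ≤ α A) (hβ : ∀ B, 0 ≤ β B)
    (hα1 : ∑ A, α A = 1) (hβ1 : ∑ B, β B = 1) (hL : 1 ≤ L) :
    ∃ P : RectPartition ((univ : Finset (Finset V)) ×ˢ (univ : Finset (Finset V))) Bool,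
      (P.size : ℝ) ≤ 2 ^ (316 * √(Fintype.card V * L)) ∧
        P.error disj (prodWeight α β) ≤ 3 * (1 / 2) ^ L := by
  obtain ⟨N, hN⟩ : ∃ N, Fintype.card V * L = N := ⟨_, rfl⟩
  obtain ⟨P, hsize, herror⟩ := exists_partition_of_mul_le_sq hα hβ hα1 hβ1 hL
    (Nat.le_add_left 1 N.sqrt) (hN ▸ N.lt_succ_sqrt.le)
  refine ⟨P, hsize.trans ?_, herror⟩
  have one_le : (1 : ℝ) ≤ √N := by
    rw [Real.one_le_sqrt]
    exact_mod_cast hN ▸ Nat.mul_pos Fintype.card_pos hL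
  have sqrt_le : (N.sqrt : ℝ) ≤ √N := Real.nat_sqrt_le_real_sqrt
  rw [← Nat.cast_mul, hN, ← Real.rpow_natCast]
  refine Real.rpow_le_rpow_of_exponent_le one_le_two ?_
  push_cast
  linarith

end Disjointness

section RelativeEntropy

theorem sub_div_log_two_le_mul_logb_div {x y : ℝ} (hx : 0 ≤ x) (hy : 0 ≤ y)
    (hxy : y = 0 → x = 0) : (x - y) / Real.log 2 ≤ x * Real.logb 2 (x / y) := by
  have hlog : 0 < Real.log 2 := Real.log_pos one_lt_two
  rcases hx.eq_or_lt with rfl | hx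
  · rw [zero_sub, zero_mul]
    exact div_nonpos_of_nonpos_of_nonneg (neg_nonpos.2 hy) hlog.le
  · have hy : 0 < y := hy.lt_of_ne fun h => hx.ne' (hxy h.symm)
    rw [Real.logb, ← mul_div_assoc]
    gcongr
    calc x - y = x * (1 - (x / y)⁻¹) := by field_simp
      _ ≤ x * Real.log (x / y) := by gcongr; exact Real.one_sub_inv_le_log_of_pos (by positivity)

variable {ι : Type*} [Fintype ι] {μ ν : ι → ℝ}

theorem sum_mul_logb_div_nonneg (hμ : ∀ p, 0 ≤ μ p) (hν : ∀ p, 0 ≤ ν p)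
    (hμν : ∀ p, ν p = 0 → μ p = 0) (hsum : ∑ p, ν p ≤ ∑ p, μ p) :
    0 ≤ ∑ p, μ p * Real.logb 2 (μ p / ν p) := by
  calc 0 ≤ (∑ p, μ p - ∑ p, ν p) / Real.log 2 :=
        div_nonneg (sub_nonneg.2 hsum) (Real.log_nonneg one_le_two)
    _ = ∑ p, (μ p - ν p) / Real.log 2 := by rw [← sum_sub_distrib, sum_div]
    _ ≤ _ := sum_le_sum fun p _ => sub_div_log_two_le_mul_logb_div (hμ p) (hν p) (hμν p)

/-- Markov's inequality for `log₂ (μ / ν)`, whose negative part has expectation at most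
`1 / log 2 ≤ 2`. -/
theorem mul_sum_filter_two_rpow_mul_lt_le (hμ : ∀ p, 0 ≤ μ p) (hν : ∀ p, 0 ≤ ν p)
    (hμν : ∀ p, ν p = 0 → μ p = 0) (T : ℝ) :
    T * ∑ p with 2 ^ T * ν p < μ p, μ p
      ≤ ∑ p, μ p * Real.logb 2 (μ p / ν p) + 2 * ∑ p, ν p := by
  rw [sum_filter, mul_sum, mul_sum, ← sum_add_distrib]
  refine sum_le_sum fun p _ => ?_
  split_ifs with h
  · have hμp : 0 < μ p := lt_of_le_of_lt (mul_nonneg (by positivity) (hν p)) h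
    have hνp : 0 < ν p := (hν p).lt_of_ne fun h0 => hμp.ne' (hμν p h0.symm)
    have le_logb : T ≤ Real.logb 2 (μ p / ν p) := by
      rw [Real.le_logb_iff_rpow_le one_lt_two (by positivity), le_div_iff₀ hνp]
      exact h.le
    rw [mul_comm]
    linarith [mul_le_mul_of_nonneg_left le_logb hμp.le]
  · have half_lt : 1 / 2 < Real.log 2 := by linarith [Real.log_two_gt_d9]
    have neg_le : -(2 * ν p) ≤ (μ p - ν p) / Real.log 2 := by
      rw [le_div_iff₀ (by linarith)]
      nlinarith [hμ p, hν p]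
    linarith [sub_div_log_two_le_mul_logb_div (hμ p) (hν p) (hμν p)]

end RelativeEntropy

section MutualInformation

variable {X Y : Type*}

/-- The marginal weight on the first coordinate. -/
def fstMarginal [Fintype Y] (μ : X × Y → ℝ) (x : X) : ℝ := ∑ y, μ (x, y)

/-- The marginal weight on the second coordinate. -/
def sndMarginal [Fintype X] (μ : X × Y → ℝ) (y : Y) : ℝ := ∑ x, μ (x, y)

variable {μ : X × Y → ℝ}

theorem fstMarginal_nonneg [Fintype Y] (hμ : ∀ p, 0 ≤ μ p) (x : X) : 0 ≤ fstMarginal μ x :=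
  sum_nonneg fun _ _ => hμ _

theorem sndMarginal_nonneg [Fintype X] (hμ : ∀ p, 0 ≤ μ p) (y : Y) : 0 ≤ sndMarginal μ y :=
  sum_nonneg fun _ _ => hμ _

variable [Fintype X] [Fintype Y]

/-- The mutual information, in bits, of the two coordinates under the distribution `μ`. The terms
with `μ p = 0` vanish. -/
noncomputable def mutualInfo (μ : X × Y → ℝ) : ℝ :=
  ∑ p, μ p * Real.logb 2 (μ p / prodWeight (fstMarginal μ) (sndMarginal μ) p)

theorem mutualInfo_eq_sum_sum (μ : X × Y → ℝ) :
    mutualInfo μ = ∑ x, ∑ y, if μ (x, y) = 0 then 0 else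
      μ (x, y) * Real.logb 2 (μ (x, y) / ((∑ y', μ (x, y')) * ∑ x', μ (x', y))) := by
  rw [mutualInfo, Fintype.sum_prod_type]
  refine sum_congr rfl fun x _ => sum_congr rfl fun y _ => ?_
  split_ifs with h
  · rw [h, zero_mul]
  · rfl

theorem sum_fstMarginal (μ : X × Y → ℝ) : ∑ x, fstMarginal μ x = ∑ p, μ p :=
  (Fintype.sum_prod_type μ).symm

theorem sum_sndMarginal (μ : X × Y → ℝ) : ∑ y, sndMarginal μ y = ∑ p, μ p :=
  (Fintype.sum_prod_type_right μ).symm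

theorem eq_zero_of_prodWeight_marginals_eq_zero (hμ : ∀ p, 0 ≤ μ p) (p : X × Y)
    (h : prodWeight (fstMarginal μ) (sndMarginal μ) p = 0) : μ p = 0 := by
  rcases mul_eq_zero.1 h with h | h
  · exact (sum_eq_zero_iff_of_nonneg fun y _ => hμ (p.1, y)).1 h p.2 (mem_univ _)
  · exact (sum_eq_zero_iff_of_nonneg fun x _ => hμ (x, p.2)).1 h p.1 (mem_univ _)

theorem sum_prodWeight_marginals (hμ1 : ∑ p, μ p = 1) :
    ∑ p, prodWeight (fstMarginal μ) (sndMarginal μ) p = 1 := by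
  rw [← univ_product_univ]
  refine (rectMass_prodWeight _ _ univ univ).trans ?_
  rw [sum_fstMarginal, sum_sndMarginal, hμ1, mul_one]

theorem mutualInfo_nonneg (hμ : ∀ p, 0 ≤ μ p) (hμ1 : ∑ p, μ p = 1) : 0 ≤ mutualInfo μ :=
  sum_mul_logb_div_nonneg hμ
    (prodWeight_nonneg (fstMarginal_nonneg hμ) (sndMarginal_nonneg hμ))
    (eq_zero_of_prodWeight_marginals_eq_zero hμ)
    ((sum_prodWeight_marginals hμ1).trans hμ1.symm).le

theorem mul_sum_filter_lt_le_mutualInfo_add_two (hμ : ∀ p, 0 ≤ μ p) (hμ1 : ∑ p, μ p = 1) (T : ℝ) :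
    T * ∑ p ∈ univ ×ˢ univ with 2 ^ T * prodWeight (fstMarginal μ) (sndMarginal μ) p < μ p, μ p
      ≤ mutualInfo μ + 2 := by
  have markov := mul_sum_filter_two_rpow_mul_lt_le hμ
    (prodWeight_nonneg (fstMarginal_nonneg hμ) (sndMarginal_nonneg hμ))
    (eq_zero_of_prodWeight_marginals_eq_zero hμ) T
  rwa [sum_prodWeight_marginals hμ1, mul_one, ← univ_product_univ] at markov

end MutualInformation

theorem two_rpow_mul_half_pow_le {y ε : ℝ} {L : ℕ} (hε : 0 < ε) (hy : 1 ≤ y) (hyε : 1 / ε ≤ y)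
    (hL : 10 * y ≤ L) : 2 ^ (4 * y) * (3 * (1 / 2 : ℝ) ^ L) ≤ ε / 2 := by
  have half_pow : (1 / 2 : ℝ) ^ L = 2 ^ (-(L : ℝ)) := by
    rw [one_div, inv_pow, Real.rpow_neg zero_le_two, Real.rpow_natCast]
  have bernoulli : 1 + 6 * y ≤ (2 : ℝ) ^ (6 * y) := by
    have := one_add_mul_self_le_rpow_one_add (s := 1) (p := 6 * y) (by norm_num) (by linarith)
    rwa [mul_one, one_add_one_eq_two] at this
  have one_le : 1 ≤ ε * y := by rwa [div_le_iff₀' hε] at hyε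
  calc 2 ^ (4 * y) * (3 * (1 / 2 : ℝ) ^ L) = 3 * 2 ^ (4 * y + -L) := by
        rw [half_pow, Real.rpow_add two_pos]; ring
    _ ≤ 3 * 2 ^ (-(6 * y)) := by
        gcongr
        · exact one_le_two
        · linarith
    _ = 3 / 2 ^ (6 * y) := by rw [Real.rpow_neg zero_le_two, ← div_eq_mul_inv]
    _ ≤ ε / 2 := by
        rw [div_le_iff₀ (by positivity)]
        nlinarith

theorem exists_partition_disj_of_mutualInfo_le {V : Type*} [Fintype V] [Nonempty V]
    {μ : Finset V × Finset V → ℝ} (hμ : ∀ p, 0 ≤ μ p) (hμ1 : ∑ p, μ p = 1) {k ε : ℝ}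
    (hk : mutualInfo μ ≤ k) (hε : 0 < ε) (hε1 : ε ≤ 1) :
    ∃ P : RectPartition ((univ : Finset (Finset V)) ×ˢ (univ : Finset (Finset V))) Bool,
      (P.size : ℝ) ≤ 2 ^ (1264 * √(Fintype.card V * (k + 1) / ε)) ∧ P.error disj μ ≤ ε := by
  have hk0 : 0 ≤ k := (mutualInfo_nonneg hμ hμ1).trans hk
  set y := (k + 1) / ε with hy
  have inv_le : 1 / ε ≤ y := by rw [hy]; gcongr; linarith
  have one_le : 1 ≤ y := (one_le_one_div hε hε1).trans inv_le
  have hL : 10 * y ≤ ⌈10 * y⌉₊ := Nat.le_ceil _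
  have hL' : (⌈10 * y⌉₊ : ℝ) ≤ 16 * y := by
    linarith [Nat.ceil_lt_add_one (show 0 ≤ 10 * y by linarith)]
  obtain ⟨P, hsize, herror⟩ := exists_partition_size_le_rpow (L := ⌈10 * y⌉₊)
    (fstMarginal_nonneg hμ) (sndMarginal_nonneg hμ) ((sum_fstMarginal μ).trans hμ1)
    ((sum_sndMarginal μ).trans hμ1) (Nat.one_le_ceil_iff.2 (by linarith))
  refine ⟨P, hsize.trans (Real.rpow_le_rpow_of_exponent_le one_le_two ?_), ?_⟩
  · have sqrt_le : √(Fintype.card V * ⌈10 * y⌉₊) ≤ 4 * √(Fintype.card V * (k + 1) / ε) :=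
      calc √(Fintype.card V * ⌈10 * y⌉₊) ≤ √(4 ^ 2 * (Fintype.card V * y)) := by
            refine Real.sqrt_le_sqrt ?_
            nlinarith [Nat.cast_nonneg (α := ℝ) (Fintype.card V)]
        _ = 4 * √(Fintype.card V * (k + 1) / ε) := by
            rw [Real.sqrt_mul (by norm_num), Real.sqrt_sq (by norm_num), hy, mul_div_assoc]
    linarith
  · have bulk := mul_le_mul_of_nonneg_left herror (show (0 : ℝ) ≤ 2 ^ (4 * y) by positivity)
    have tail : ∑ p ∈ univ ×ˢ univ with
        2 ^ (4 * y) * prodWeight (fstMarginal μ) (sndMarginal μ) p < μ p, μ p ≤ ε / 2 := by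
      have tail_mul := mul_sum_filter_lt_le_mutualInfo_add_two hμ hμ1 (4 * y)
      have hyε : y * ε = k + 1 := div_mul_cancel₀ _ hε.ne'
      refine le_of_mul_le_mul_left (tail_mul.trans ?_) (show 0 < 4 * y by linarith)
      linarith
    have split := P.error_le_add_sum_filter (f := disj) hμ
      (prodWeight_nonneg (fstMarginal_nonneg hμ) (sndMarginal_nonneg hμ))
      (show (0 : ℝ) ≤ 2 ^ (4 * y) by positivity)
    linarith [two_rpow_mul_half_pow_le hε one_le inv_le hL]

theorem mislabelled_disj {V : Type*} [DecidableEq V] (w : Finset V × Finset V → ℝ) (b : Bool)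
    (p : Finset V × Finset V) :
    mislabelled disj w b p = if (Disjoint p.1 p.2 ↔ b = true) then 0 else w p := by
  rw [mislabelled, Set.indicator_apply, ← ite_not]
  refine if_congr ?_ rfl rfl
  cases b <;> simp [disj]

theorem statement12_general {V : Type*} [Fintype V] [DecidableEq V] [Nonempty V]
    {μ : Finset V × Finset V → ℝ} (hμ : ∀ p, 0 ≤ μ p) (hμ1 : ∑ p, μ p = 1) {k ε : ℝ}
    (hk : mutualInfo μ ≤ k) (hε : 0 < ε) (hε1 : ε ≤ 1) :
    ∃ m : ℕ, 0 < m ∧ (m : ℝ) ≤ 2 ^ (1264 * √(Fintype.card V * (k + 1) / ε)) ∧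
      ∃ ℱ 𝒢 : Fin m → Finset (Finset V), ∃ b : Fin m → Bool,
        (∀ i j, i ≠ j → Disjoint (ℱ i ×ˢ 𝒢 i) (ℱ j ×ˢ 𝒢 j)) ∧
        (∀ p : Finset V × Finset V, ∃ i, p ∈ ℱ i ×ˢ 𝒢 i) ∧
        ∑ i, ∑ p ∈ ℱ i ×ˢ 𝒢 i, (if (Disjoint p.1 p.2 ↔ b i = true) then 0 else μ p) ≤ ε := by
  obtain ⟨P, hsize, herror⟩ := exists_partition_disj_of_mutualInfo_le hμ hμ1 hk hε hε1
  obtain ⟨ℱ, 𝒢, b, disjoint, cover, error_eq⟩ := P.exists_fin disj μ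
  refine ⟨P.size, P.size_pos ⟨(∅, ∅), by simp⟩, hsize, ℱ, 𝒢, b, disjoint,
    fun p => cover p (by simp), ?_⟩
  simp only [← mislabelled_disj]
  exact error_eq.trans_le herror

/-- for every distribution `μ` on `2^[n] × 2^[n]` with mutual information
at most `k` and error `ε ∈ (0, 1/2)`, there is a partition of `2^[n] × 2^[n]` into at most
`2^{C√(n(k+1)/ε)}` labeled combinatorial rectangles computing disjointness with error at
most `ε` under `μ`. -/
theorem statement12 :
    ∃ C : ℝ, 0 < C ∧ ∀ n : ℕ, 0 < n →
      ∀ μ : Finset (Fin n) × Finset (Fin n) → ℝ,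
        (∀ p, 0 ≤ μ p) → (∑ p, μ p) = 1 →
        ∀ k : ℝ,
          (∑ A, ∑ B,
              (if μ (A, B) = 0 then 0 else
                μ (A, B) * Real.logb 2
                  (μ (A, B) / ((∑ B', μ (A, B')) * (∑ A', μ (A', B)))))
            ≤ k) →
          ∀ ε : ℝ, 0 < ε → ε < 1 / 2 →
            ∃ m : ℕ, 0 < m ∧
              (m : ℝ) ≤ (2 : ℝ) ^ (C * Real.sqrt (n * (k + 1) / ε)) ∧
              ∃ ℱ 𝒢 : Fin m → Finset (Finset (Fin n)), ∃ b : Fin m → Bool,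
                (∀ i j, i ≠ j → Disjoint (ℱ i ×ˢ 𝒢 i) (ℱ j ×ˢ 𝒢 j)) ∧
                (∀ p : Finset (Fin n) × Finset (Fin n), ∃ i, p ∈ ℱ i ×ˢ 𝒢 i) ∧
                ∑ i, ∑ p ∈ ℱ i ×ˢ 𝒢 i,
                    (if (Disjoint p.1 p.2 ↔ b i = true) then 0 else μ p)
                  ≤ ε := by
  refine ⟨1264, by norm_num, fun n hn μ hμ hμ1 k hk ε hε hε1 => ?_⟩
  have := Fin.pos_iff_nonempty.1 hn
  simpa only [Fintype.card_fin] using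
    statement12_general hμ hμ1 ((mutualInfo_eq_sum_sum μ).trans_le hk) hε (by linarith)
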